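/- Let X be a real Banach space having property (E) and let Y ⊆ X* be a norming norm-closed linear subspace. Let M : Σ → b(X) be a set-valued map defined on a σ-algebra Σ such that: (i) M(A) is relatively σ(X,Y)-compact for every A ∈ Σ; (ii) the support map s(x*,M) is countably additive for every x* ∈ Y; and (iii) s(x*,M) is finitely additive for every x* ∈ X*. Then M is a multimeasure, i.e., s(x*,M) is countably additive for every x* ∈ X*. -/

import Mathlib

/-!
For a disjoint sequence `A n` put `N I = M (⋃ n ∈ I, A n)`. Countable additivity of `s(f, M)`
amounts to `s(f, N [k, ∞)) → 0` for all such sequences, and since `s(f, ·) + s(-f, ·) ≥ 0` it is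
enough to bound the limit superior above by `0`, for `f` and for `-f`.

As `Y` is norming, Hahn–Banach and property (E) give a bounded sequence `g n` in `Y` with
`g n → f` pointwise. By finite additivity and Hahn–Banach, `conv N [k, ∞)` lies in the closure of
`conv N {k} + conv N [k + 1, ∞)`. So a point `r 0` of `N [0, ∞)` that almost attains
`s(f, N [0, ∞))` can be split successively as `r k ≈ d k + r (k + 1)` with `d k ∈ conv N {k}`, and
every `r k` then almost attains `s(f, N [k, ∞))`. It remains to see that `f (r k) → 0`.

Fix `I ⊆ ℕ`. The functional `g ↦ ∑_{i ∈ I} g (d i)` on `Y` is dominated by `s(·, N I)`, hence is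
integration against a measure on the `σ(X, Y)`-compact closure of `N I`, and by dominated
convergence its values at the `g n` converge. Thus the summable sequences
`i ↦ g n (r i - r (i + 1))`, whose sums are `g n (r 0)`, converge along every subset of `ℕ`. By
Schur's theorem (Baire category on `2^ℕ`) their tails are uniformly small, so
`∑ f (r i - r (i + 1)) = f (r 0)`, that is, `f (r k) → 0`.
-/

/-- The topology `σ(X, Y)` of pointwise convergence on a set `Y ⊆ X*`. -/
def sigmaTop {X : Type*} [NormedAddCommGroup X] [NormedSpace ℝ X]
    (Y : Set (X →L[ℝ] ℝ)) : TopologicalSpace X :=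
  TopologicalSpace.induced (fun x => fun y : Y => (y : X →L[ℝ] ℝ) x) Pi.topologicalSpace

/-- The weak* topology on `X*`: pointwise convergence on `X`. -/
def weakStarTop (X : Type*) [NormedAddCommGroup X] [NormedSpace ℝ X] :
    TopologicalSpace (X →L[ℝ] ℝ) :=
  TopologicalSpace.induced (fun f : X →L[ℝ] ℝ => fun x : X => f x) Pi.topologicalSpace

/-- Property (E) of Efremov: every point of the weak*-closure of a convex bounded set
`C ⊆ X*` is the weak* limit of a sequence from `C`. -/
def PropertyE (X : Type*) [NormedAddCommGroup X] [NormedSpace ℝ X] : Prop :=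
  ∀ C : Set (X →L[ℝ] ℝ), Convex ℝ C → Bornology.IsBounded C →
    ∀ f : X →L[ℝ] ℝ, f ∈ @closure (X →L[ℝ] ℝ) (weakStarTop X) C →
      ∃ g : ℕ → X →L[ℝ] ℝ, (∀ n, g n ∈ C) ∧
        ∀ x : X, Filter.Tendsto (fun n => g n x) Filter.atTop (nhds (f x))

/-- A linear subspace `Y ⊆ X*` is norming: `x ↦ sup {|x*(x)| : x* ∈ Y, ‖x*‖ ≤ 1}` is an
equivalent norm on `X`. -/
def IsNorming {X : Type*} [NormedAddCommGroup X] [NormedSpace ℝ X]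
    (Y : Submodule ℝ (X →L[ℝ] ℝ)) : Prop :=
  ∃ c : ℝ, 0 < c ∧ ∀ x : X,
    c * ‖x‖ ≤ sSup ((fun f : X →L[ℝ] ℝ => |f x|) ''
      ((Y : Set (X →L[ℝ] ℝ)) ∩ Metric.closedBall 0 1))

/-- The support functional `s(x*, C) = sup x*(C)`. -/
noncomputable def supportFn {X : Type*} [NormedAddCommGroup X] [NormedSpace ℝ X]
    (f : X →L[ℝ] ℝ) (C : Set X) : ℝ := sSup (f '' C)

/-- A set function on a σ-algebra, with values in a topological abelian monoid, is
countably additive. -/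
def CountablyAdditive {Ω E : Type*} [MeasurableSpace Ω] [AddCommMonoid E]
    [TopologicalSpace E] (ν : Set Ω → E) : Prop :=
  ∀ A : ℕ → Set Ω, (∀ n, MeasurableSet (A n)) → Pairwise (Function.onFun Disjoint A) →
    HasSum (fun n => ν (A n)) (ν (⋃ n, A n))

/-- A real set function on a σ-algebra is finitely additive. -/
def FinitelyAdditive {Ω : Type*} [MeasurableSpace Ω] (μ : Set Ω → ℝ) : Prop :=
  ∀ A B : Set Ω, MeasurableSet A → MeasurableSet B → Disjoint A B →
    μ (A ∪ B) = μ A + μ B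

open Filter Topology MeasureTheory
open scoped CompactlySupported Pointwise

section SetFunctions

variable {Ω : Type*} [MeasurableSpace Ω] {μ : Set Ω → ℝ} {ν : Set ℕ → ℝ} {A : ℕ → Set Ω}

theorem CountablyAdditive.empty (hμ : CountablyAdditive μ) : μ ∅ = 0 :=
  tendsto_const_nhds_iff.1 (hμ (fun _ => ∅) (fun _ => .empty)
    fun _ _ _ => disjoint_bot_left).summable.tendsto_atTop_zero

theorem FinitelyAdditive.empty (hμ : FinitelyAdditive μ) : μ ∅ = 0 := by
  simpa using hμ ∅ ∅ .empty .empty disjoint_bot_left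

theorem disjoint_biUnion_of_pairwise {ι α : Type*} {A : ι → Set α}
    (hA : Pairwise (Function.onFun Disjoint A)) {I J : Set ι} (hIJ : Disjoint I J) :
    Disjoint (⋃ i ∈ I, A i) (⋃ j ∈ J, A j) :=
  Set.disjoint_iUnion₂_left.2 fun _ hi => Set.disjoint_iUnion₂_right.2 fun _ hj =>
    hA (hIJ.ne_of_mem hi hj)

theorem CountablyAdditive.comp_biUnion (hμ : CountablyAdditive μ)
    (hA : ∀ n, MeasurableSet (A n)) (hdisj : Pairwise (Function.onFun Disjoint A)) :
    CountablyAdditive fun I : Set ℕ => μ (⋃ n ∈ I, A n) := by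
  intro I _ hI
  simpa only [Set.biUnion_iUnion] using hμ (fun k => ⋃ n ∈ I k, A n)
    (fun k => .biUnion (I k).to_countable fun n _ => hA n)
    fun j k hjk => disjoint_biUnion_of_pairwise hdisj (hI hjk)

theorem FinitelyAdditive.comp_biUnion (hμ : FinitelyAdditive μ)
    (hA : ∀ n, MeasurableSet (A n)) (hdisj : Pairwise (Function.onFun Disjoint A)) :
    FinitelyAdditive fun I : Set ℕ => μ (⋃ n ∈ I, A n) := by
  intro I J _ _ hIJ
  simpa only [Set.biUnion_union] using hμ _ _ (.biUnion I.to_countable fun n _ => hA n)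
    (.biUnion J.to_countable fun n _ => hA n) (disjoint_biUnion_of_pairwise hdisj hIJ)

theorem CountablyAdditive.hasSum_indicator_singleton (hν : CountablyAdditive ν) (I : Set ℕ) :
    HasSum (I.indicator fun n => ν {n}) (ν I) := by
  have hsum := hν (fun n => {n} ∩ I) (fun _ => .of_discrete)
    fun m n hmn => (Set.disjoint_singleton.2 hmn).mono Set.inter_subset_left Set.inter_subset_left
  rw [← Set.iUnion_inter, Set.iUnion_of_singleton, Set.univ_inter] at hsum
  convert hsum using 2 with n
  by_cases hn : n ∈ I
  · rw [Set.indicator_of_mem hn, Set.inter_eq_left.2 (Set.singleton_subset_iff.2 hn)]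
  · rw [Set.indicator_of_notMem hn, Set.singleton_inter_eq_empty.2 hn, hν.empty]

theorem CountablyAdditive.summable_singleton (hν : CountablyAdditive ν) :
    Summable fun n => ν {n} := by
  simpa only [Set.indicator_univ] using (hν.hasSum_indicator_singleton Set.univ).summable

theorem FinitelyAdditive.Ici_eq_singleton_add (hν : FinitelyAdditive ν) (k : ℕ) :
    ν (Set.Ici k) = ν {k} + ν (Set.Ici (k + 1)) := by
  have hunion : Set.Ici k = {k} ∪ Set.Ici (k + 1) := by
    ext n
    simp only [Set.mem_Ici, Set.mem_union, Set.mem_singleton_iff]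
    omega
  rw [hunion]
  exact hν _ _ .of_discrete .of_discrete (by simp)

theorem FinitelyAdditive.sum_range_singleton (hν : FinitelyAdditive ν) (k : ℕ) :
    ∑ n ∈ Finset.range k, ν {n} = ν Set.univ - ν (Set.Ici k) := by
  have hstep : ∀ n, ν {n} = ν (Set.Ici n) - ν (Set.Ici (n + 1)) := fun n =>
    eq_sub_of_add_eq (hν.Ici_eq_singleton_add n).symm
  rw [Finset.sum_congr rfl fun n _ => hstep n, Finset.sum_range_sub', ← bot_eq_zero,
    Set.Ici_bot]

theorem CountablyAdditive.tendsto_Ici (hν : CountablyAdditive ν) :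
    Tendsto (fun k => ν (Set.Ici k)) atTop (𝓝 0) := by
  refine (tendsto_sum_nat_add fun n => ν {n}).congr fun k => ?_
  have htail := hν (fun n => {n + k}) (fun _ => .of_discrete)
    fun m n hmn => Set.disjoint_singleton.2 (by simpa using hmn)
  have hunion : ⋃ n, {n + k} = Set.Ici k := by
    ext n
    simp [le_iff_exists_add', eq_comm]
  rw [htail.tsum_eq, hunion]

theorem summable_of_forall_tendsto_sum_range_indicator {a : ℕ → ℝ}
    (ha : ∀ I : Set ℕ, ∃ l,
      Tendsto (fun k => ∑ n ∈ Finset.range k, I.indicator a n) atTop (𝓝 l)) :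
    Summable a := by
  obtain ⟨p, hp⟩ := ha {n | 0 ≤ a n}
  obtain ⟨q, hq⟩ := ha {n | 0 ≤ a n}ᶜ
  have hpos : Summable ({n | 0 ≤ a n}.indicator a) :=
    ((hasSum_iff_tendsto_nat_of_nonneg (Set.indicator_nonneg fun n hn => hn) p).2 hp).summable
  have hneg : Summable fun n => -{n | 0 ≤ a n}ᶜ.indicator a n := by
    refine ((hasSum_iff_tendsto_nat_of_nonneg (fun n => ?_) (-q)).2 ?_).summable
    · exact neg_nonneg.2 (Set.indicator_nonpos (fun n hn => (not_le.1 hn).le) n)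
    · simpa only [Finset.sum_neg_distrib] using hq.neg
  rw [← Set.indicator_self_add_compl {n | 0 ≤ a n} a]
  exact hpos.add hneg.of_neg

-- Unconditional convergence is automatic because every subfamily of `A` is again admissible.
theorem FinitelyAdditive.countablyAdditive_of_tendsto_zero (hμ : FinitelyAdditive μ)
    (htail : ∀ A : ℕ → Set Ω, (∀ n, MeasurableSet (A n)) → Pairwise (Function.onFun Disjoint A) →
      Tendsto (fun k => μ (⋃ n ∈ Set.Ici k, A n)) atTop (𝓝 0)) :
    CountablyAdditive μ := by
  have hsum : ∀ A : ℕ → Set Ω, (∀ n, MeasurableSet (A n)) →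
      Pairwise (Function.onFun Disjoint A) →
      Tendsto (fun k => ∑ n ∈ Finset.range k, μ (A n)) atTop (𝓝 (μ (⋃ n, A n))) := by
    intro A hA hdisj
    have hpartial := (hμ.comp_biUnion hA hdisj).sum_range_singleton
    simp only [Set.biUnion_singleton, Set.biUnion_univ] at hpartial
    simpa only [hpartial, sub_zero] using tendsto_const_nhds.sub (htail A hA hdisj)
  intro A hA hdisj
  have hsummable : Summable fun n => μ (A n) := by
    classical
    have hsub : ∀ (I : Set ℕ) n, (if n ∈ I then A n else ∅) ⊆ A n := fun I n => by
      split_ifs <;> simp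
    refine summable_of_forall_tendsto_sum_range_indicator fun I =>
      ⟨μ (⋃ n, if n ∈ I then A n else ∅), ?_⟩
    simpa only [Set.indicator_apply, apply_ite μ, hμ.empty] using
      hsum (fun n => if n ∈ I then A n else ∅)
        (fun n => MeasurableSet.ite' (fun _ => hA n) fun _ => .empty)
        fun m n hmn => (hdisj hmn).mono (hsub I m) (hsub I n)
  exact (hsummable.hasSum_iff_tendsto_nat).2 (hsum A hA hdisj)

end SetFunctions

section Schur

theorem exists_isOpen_forall_dist_le_of_cauchySeq {Z E : Type*} [TopologicalSpace Z] [BaireSpace Z]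
    [Nonempty Z] [PseudoMetricSpace E] {S : ℕ → Z → E} (hS : ∀ n, Continuous (S n))
    (hcauchy : ∀ z, CauchySeq fun n => S n z) {ε : ℝ} (hε : 0 < ε) :
    ∃ U : Set Z, IsOpen U ∧ U.Nonempty ∧
      ∃ k, ∀ z ∈ U, ∀ m ≥ k, ∀ n ≥ k, dist (S m z) (S n z) ≤ ε := by
  let D : ℕ → Set Z := fun k => {z | ∀ m ≥ k, ∀ n ≥ k, dist (S m z) (S n z) ≤ ε}
  have hclosed : ∀ k, IsClosed (D k) := by
    intro k
    simp only [D, Set.ofPred_forall]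
    exact isClosed_iInter fun m => isClosed_iInter fun _ => isClosed_iInter fun n =>
      isClosed_iInter fun _ => isClosed_le ((hS m).dist (hS n)) continuous_const
  have hcover : ⋃ k, D k = Set.univ := by
    refine Set.eq_univ_of_forall fun z => Set.mem_iUnion.2 ?_
    obtain ⟨k, hk⟩ := Metric.cauchySeq_iff.1 (hcauchy z) ε hε
    exact ⟨k, fun m hm n hn => (hk m hm n hn).le⟩
  obtain ⟨k, hk⟩ := nonempty_interior_of_iUnion_of_closed hclosed hcover
  exact ⟨interior (D k), isOpen_interior, hk, k, fun z hz => interior_subset hz⟩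

theorem tsum_Ici_indicator {E : Type*} [AddCommGroup E] [TopologicalSpace E]
    [IsTopologicalAddGroup E] [T2Space E] {a : ℕ → E} (ha : Summable a) (k : ℕ) :
    ∑' i, (Set.Ici k).indicator a i = ∑' i, a i - ∑ i ∈ Finset.range k, a i := by
  have hcompl : Set.Ici k = (↑(Finset.range k) : Set ℕ)ᶜ := by
    ext i
    simp
  rw [hcompl, ← tsum_subtype, eq_sub_iff_add_eq', ha.sum_add_tsum_compl]

variable {ι E : Type*} [NormedAddCommGroup E] [CompleteSpace E]

theorem continuous_tsum_indicator {a : ι → E} (ha : Summable fun i => ‖a i‖) :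
    Continuous fun p : ι → Bool => ∑' i, {i | p i}.indicator a i := by
  refine continuous_tsum (u := fun i => ‖a i‖) (fun i => ?_) ha
    fun i p => norm_indicator_le_norm_self a i
  have hcomp : (fun p : ι → Bool => {i | p i}.indicator a i) =
      (fun b : Bool => if b then a i else 0) ∘ fun p => p i := by
    classical
    ext p
    simp [Set.indicator_apply]
  rw [hcomp]
  exact continuous_of_discreteTopology.comp (continuous_apply i)

-- Baire's theorem on `ι → Bool` controls all sets agreeing with some set `P` on a finite set `F`,
-- and the sum over `I` is the difference of the sums over `P ∪ I` and `P`.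
theorem exists_finset_forall_dist_tsum_indicator_le {a : ℕ → ι → E}
    (ha : ∀ n, Summable fun i => ‖a n i‖)
    (hcauchy : ∀ I : Set ι, CauchySeq fun n => ∑' i, I.indicator (a n) i) {ε : ℝ} (hε : 0 < ε) :
    ∃ (F : Finset ι) (k : ℕ), ∀ I : Set ι, Disjoint I F → ∀ m ≥ k, ∀ n ≥ k,
      dist (∑' i, I.indicator (a m) i) (∑' i, I.indicator (a n) i) ≤ ε := by
  classical
  obtain ⟨U, hUopen, ⟨p, hp⟩, k, hk⟩ := exists_isOpen_forall_dist_le_of_cauchySeq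
    (fun n => continuous_tsum_indicator (ha n)) (fun p => hcauchy {i | p i}) (half_pos hε)
  obtain ⟨F, u, hu, hsub⟩ := isOpen_pi_iff.1 hUopen p hp
  refine ⟨F, k, fun I hI m hm n hn => ?_⟩
  let P : Set ι := {i | i ∈ F ∧ p i}
  have hclose : ∀ J : Set ι, Disjoint J F →
      dist (∑' i, (P ∪ J).indicator (a m) i) (∑' i, (P ∪ J).indicator (a n) i) ≤ ε / 2 := by
    intro J hJ
    have hmem : (fun i => decide (i ∈ P ∪ J)) ∈ U := by
      refine hsub fun i hi => ?_
      have hiJ : i ∉ J := hJ.notMem_of_mem_right hi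
      have hiP : decide (i ∈ P ∪ J) = p i := by
        simp [P, hiJ, Finset.mem_coe.1 hi]
      exact hiP.symm ▸ (hu i hi).2
    simpa only [decide_eq_true_eq, Set.ofPred_mem_eq] using hk _ hmem m hm n hn
  have hPI : Disjoint P I := hI.symm.mono_left fun i hi => hi.1
  have hsplit : ∀ n, ∑' i, I.indicator (a n) i =
      ∑' i, (P ∪ I).indicator (a n) i - ∑' i, P.indicator (a n) i := by
    intro n
    rw [Set.indicator_union_of_disjoint hPI, Summable.tsum_add ((ha n).of_norm.indicator P)
      ((ha n).of_norm.indicator I), add_sub_cancel_left]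
  rw [hsplit m, hsplit n]
  refine (dist_sub_sub_le _ _ _ _).trans ?_
  have hempty := hclose ∅ (Set.empty_disjoint _)
  rw [Set.union_empty] at hempty
  linarith [hclose I hI]

-- Schur's argument: the tails of `a n` are uniformly small in `n`.
theorem tendsto_sum_range_of_cauchySeq_tsum_indicator {a : ℕ → ℕ → E}
    (ha : ∀ n, Summable fun i => ‖a n i‖)
    (hcauchy : ∀ I : Set ℕ, CauchySeq fun n => ∑' i, I.indicator (a n) i) {b : ℕ → E} {s : E}
    (hb : ∀ i, Tendsto (fun n => a n i) atTop (𝓝 (b i)))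
    (hs : Tendsto (fun n => ∑' i, a n i) atTop (𝓝 s)) :
    Tendsto (fun k => ∑ i ∈ Finset.range k, b i) atTop (𝓝 s) := by
  refine Metric.tendsto_nhds.2 fun ε hε => ?_
  obtain ⟨F, m, hFm⟩ := exists_finset_forall_dist_tsum_indicator_le ha hcauchy
    (half_pos (half_pos hε))
  have htail : Tendsto (fun k => ∑' i, (Set.Ici k).indicator (a m) i) atTop (𝓝 0) := by
    simpa only [tsum_Ici_indicator (ha m).of_norm, sub_self] using
      (tendsto_const_nhds (x := ∑' i, a m i)).sub (ha m).of_norm.hasSum.tendsto_sum_nat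
  have hFk : ∀ᶠ k in atTop, Disjoint (Set.Ici k) (F : Set ℕ) := by
    filter_upwards [eventually_gt_atTop (F.sup id)] with k hk
    exact Set.disjoint_left.2 fun i hik hiF =>
      (hk.trans_le hik).not_ge (Finset.le_sup (f := id) hiF)
  filter_upwards [hFk, Metric.tendsto_nhds.1 htail _ (half_pos (half_pos hε))] with k hkF hkm
  have hlim : Tendsto (fun n => ∑' i, (Set.Ici k).indicator (a n) i) atTop
      (𝓝 (s - ∑ i ∈ Finset.range k, b i)) := by
    simpa only [tsum_Ici_indicator (ha _).of_norm] using
      hs.sub (tendsto_finsetSum _ fun i _ => hb i)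
  have hbound : dist (s - ∑ i ∈ Finset.range k, b i) 0 ≤ ε / 2 := by
    refine le_of_tendsto (hlim.dist tendsto_const_nhds) ?_
    filter_upwards [eventually_ge_atTop m] with n hn
    linarith [hFm _ hkF n hn m le_rfl, dist_triangle (∑' i, (Set.Ici k).indicator (a n) i)
      (∑' i, (Set.Ici k).indicator (a m) i) 0]
  rw [dist_comm, dist_eq_norm, ← dist_zero_right]
  linarith

theorem tendsto_zero_of_cauchySeq_tsum_indicator_sub {x : ℕ → ℕ → E} {y : ℕ → E}
    (hx : ∀ n, Summable fun i => ‖x n i - x n (i + 1)‖)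
    (hcauchy : ∀ I : Set ℕ,
      CauchySeq fun n => ∑' i, I.indicator (fun i => x n i - x n (i + 1)) i)
    (hzero : ∀ n, Tendsto (x n) atTop (𝓝 0))
    (hy : ∀ i, Tendsto (fun n => x n i) atTop (𝓝 (y i))) :
    Tendsto y atTop (𝓝 0) := by
  have htsum : ∀ n, ∑' i, (x n i - x n (i + 1)) = x n 0 := by
    intro n
    refine tendsto_nhds_unique (hx n).of_norm.hasSum.tendsto_sum_nat ?_
    simpa only [Finset.sum_range_sub', sub_zero] using tendsto_const_nhds.sub (hzero n)
  have hsum : Tendsto (fun k => y 0 - y k) atTop (𝓝 (y 0)) := by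
    simpa only [Finset.sum_range_sub'] using tendsto_sum_range_of_cauchySeq_tsum_indicator hx
      hcauchy (fun i => (hy i).sub (hy (i + 1))) (by simpa only [htsum] using hy 0)
  simpa only [sub_sub_cancel, sub_self] using (tendsto_const_nhds (x := y 0)).sub hsum

end Schur

section DominatedFunctionals

variable {E : Type*} [AddCommGroup E] [Module ℝ E]

theorem exists_linearMap_comp_eq_of_le_sublinear {V : Type*} [AddCommGroup V] [Module ℝ V]
    {N : V → ℝ} (hsmul : ∀ c : ℝ, 0 < c → ∀ v, N (c • v) = c * N v)
    (hadd : ∀ v w, N (v + w) ≤ N v + N w) (T : E →ₗ[ℝ] V) {φ : E →ₗ[ℝ] ℝ}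
    (hφ : ∀ e, φ e ≤ N (T e)) :
    ∃ Λ : V →ₗ[ℝ] ℝ, Λ ∘ₗ T = φ ∧ ∀ v, Λ v ≤ N v := by
  have hN0 : N 0 = 0 := by
    have h2 := hsmul 2 two_pos 0
    rw [smul_zero] at h2
    linarith
  have hker : ∀ e, T e = 0 → φ e = 0 := by
    intro e he
    have hpos := hφ e
    have hneg := hφ (-e)
    rw [map_neg, map_neg, he, neg_zero] at hneg
    rw [he] at hpos
    linarith
  obtain ⟨σ, hσ⟩ := T.rangeRestrict.exists_rightInverse_of_surjective T.range_rangeRestrict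
  have hTσ : ∀ v : LinearMap.range T, T (σ v) = v := fun v =>
    congrArg Subtype.val (LinearMap.congr_fun hσ v)
  obtain ⟨Λ, hΛ, hle⟩ := exists_extension_of_le_sublinear ⟨LinearMap.range T, φ ∘ₗ σ⟩ N hsmul hadd
    fun v => (hφ (σ v)).trans_eq (congrArg N (hTσ v))
  refine ⟨Λ, LinearMap.ext fun e => ?_, hle⟩
  have hdiff := hker (σ ⟨T e, e, rfl⟩ - e) (by rw [map_sub, hTσ, sub_self])
  rw [map_sub, sub_eq_zero] at hdiff
  exact (hΛ ⟨T e, e, rfl⟩).trans hdiff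

variable {K : Type*} [TopologicalSpace K] [CompactSpace K]

theorem exists_measure_forall_integral_eq_of_nonneg [T2Space K] [MeasurableSpace K] [BorelSpace K]
    {Λ : C(K, ℝ) →ₗ[ℝ] ℝ} (hΛ : ∀ v, 0 ≤ v → 0 ≤ Λ v) :
    ∃ μ : Measure K, IsFiniteMeasure μ ∧ ∀ v : C(K, ℝ), ∫ x, v x ∂μ = Λ v := by
  let Λ' : C_c(K, ℝ) →ₚ[ℝ] ℝ := PositiveLinearMap.mk₀
    { toFun := fun v => Λ v.toContinuousMap
      map_add' := fun v w => Λ.map_add v.toContinuousMap w.toContinuousMap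
      map_smul' := fun r v => Λ.map_smul r v.toContinuousMap }
    fun v hv => hΛ v.toContinuousMap hv
  exact ⟨RealRMK.rieszMeasure Λ', inferInstance, fun v =>
    RealRMK.integral_rieszMeasure Λ' ⟨v, HasCompactSupport.of_compactSpace _⟩⟩

variable [Nonempty K]

theorem iSup_continuousMap_add_le (v w : C(K, ℝ)) : ⨆ x, (v + w) x ≤ (⨆ x, v x) + ⨆ x, w x :=
  ciSup_le fun x => add_le_add (le_ciSup (isCompact_range v.continuous).bddAbove x)
    (le_ciSup (isCompact_range w.continuous).bddAbove x)

theorem exists_measure_forall_integral_eq_of_le_iSup [T2Space K] [MeasurableSpace K] [BorelSpace K]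
    (T : E →ₗ[ℝ] C(K, ℝ)) {φ : E →ₗ[ℝ] ℝ} (hφ : ∀ e, φ e ≤ ⨆ x, T e x) :
    ∃ μ : Measure K, IsFiniteMeasure μ ∧ ∀ e, ∫ x, T e x ∂μ = φ e := by
  obtain ⟨Λ, rfl, hle⟩ := exists_linearMap_comp_eq_of_le_sublinear
    (N := fun v : C(K, ℝ) => ⨆ x, v x)
    (fun c hc v => (Real.mul_iSup_of_nonneg hc.le v).symm) iSup_continuousMap_add_le T hφ
  have hpos : ∀ v, 0 ≤ v → 0 ≤ Λ v := by
    intro v hv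
    have hneg : Λ (-v) ≤ 0 := (hle (-v)).trans (ciSup_le fun x => neg_nonpos.2 (hv x))
    rwa [map_neg, neg_nonpos] at hneg
  obtain ⟨μ, hμ, hint⟩ := exists_measure_forall_integral_eq_of_nonneg hpos
  exact ⟨μ, hμ, fun e => hint (T e)⟩

theorem exists_tendsto_of_le_iSup [T2Space K] (T : E →ₗ[ℝ] C(K, ℝ)) {φ : E →ₗ[ℝ] ℝ}
    (hφ : ∀ e, φ e ≤ ⨆ x, T e x) {e : ℕ → E} {B : ℝ} (hB : ∀ n x, |T (e n) x| ≤ B)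
    (hlim : ∀ x, ∃ l, Tendsto (fun n => T (e n) x) atTop (𝓝 l)) :
    ∃ l, Tendsto (fun n => φ (e n)) atTop (𝓝 l) := by
  borelize K
  choose u hu using hlim
  obtain ⟨μ, hμ, hint⟩ := exists_measure_forall_integral_eq_of_le_iSup T hφ
  refine ⟨∫ x, u x ∂μ, ?_⟩
  simpa only [hint] using tendsto_integral_of_dominated_convergence (fun _ => B)
    (fun n => (T (e n)).continuous.measurable.aestronglyMeasurable) (integrable_const (μ := μ) B)
    (fun n => .of_forall (hB n)) (.of_forall hu)

end DominatedFunctionals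

section SupportFunctions

variable {X : Type*} [NormedAddCommGroup X] [NormedSpace ℝ X] {A B C : Set X}

theorem le_supportFn (hC : Bornology.IsBounded C) (f : X →L[ℝ] ℝ) {x : X} (hx : x ∈ C) :
    f x ≤ supportFn f C :=
  le_csSup (f.lipschitz.isBounded_image hC).bddAbove ⟨x, hx, rfl⟩

theorem le_supportFn_of_mem_convexHull (hC : Bornology.IsBounded C) (f : X →L[ℝ] ℝ) {x : X}
    (hx : x ∈ convexHull ℝ C) : f x ≤ supportFn f C :=
  convexHull_min (t := {x | f x ≤ supportFn f C}) (fun _ hy => le_supportFn hC f hy)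
    (convex_halfSpace_le f.toLinearMap.isLinear _) hx

theorem exists_lt_of_lt_supportFn (hC : C.Nonempty) {f : X →L[ℝ] ℝ} {r : ℝ}
    (hr : r < supportFn f C) : ∃ x ∈ C, r < f x := by
  simpa only [Set.exists_mem_image] using exists_lt_of_lt_csSup (hC.image f) hr

theorem supportFn_add_supportFn_neg_nonneg (hne : C.Nonempty) (hC : Bornology.IsBounded C)
    (f : X →L[ℝ] ℝ) : 0 ≤ supportFn f C + supportFn (-f) C := by
  obtain ⟨x, hx⟩ := hne
  calc
    (0 : ℝ) = f x + (-f) x := by simp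
    _ ≤ supportFn f C + supportFn (-f) C :=
      add_le_add (le_supportFn hC f hx) (le_supportFn hC (-f) hx)

theorem abs_le_abs_supportFn_add (hC : Bornology.IsBounded C) (f : X →L[ℝ] ℝ) {x : X}
    (hx : x ∈ convexHull ℝ C) : |f x| ≤ |supportFn f C| + |supportFn (-f) C| := by
  have hpos := (le_supportFn_of_mem_convexHull hC f hx).trans (le_abs_self _)
  have hneg := (le_supportFn_of_mem_convexHull hC (-f) hx).trans (le_abs_self _)
  rw [neg_apply] at hneg
  exact abs_le.2 ⟨by linarith [abs_nonneg (supportFn f C)],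
    by linarith [abs_nonneg (supportFn (-f) C)]⟩

theorem convexHull_subset_closure_add (hA : Bornology.IsBounded A) (hB : B.Nonempty)
    (hC : C.Nonempty) (hle : ∀ f : X →L[ℝ] ℝ, supportFn f A ≤ supportFn f B + supportFn f C) :
    convexHull ℝ A ⊆ closure (convexHull ℝ B + convexHull ℝ C) := by
  intro x hx
  by_contra hnot
  obtain ⟨f, u, hlt, hux⟩ := geometric_hahn_banach_closed_point
    ((convex_convexHull ℝ B).add (convex_convexHull ℝ C)).closure isClosed_closure hnot
  have hsum : u < supportFn f B + supportFn f C :=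
    hux.trans_le ((le_supportFn_of_mem_convexHull hA f hx).trans (hle f))
  obtain ⟨b, hb, hbu⟩ := exists_lt_of_lt_supportFn hB (sub_lt_iff_lt_add.2 hsum)
  obtain ⟨c, hc, hcu⟩ := exists_lt_of_lt_supportFn hC (sub_lt_comm.1 hbu)
  have hbc := hlt (b + c) (subset_closure
    (Set.add_mem_add (subset_convexHull ℝ B hb) (subset_convexHull ℝ C hc)))
  rw [map_add] at hbc
  linarith

/-- The embedding of `X` into the algebraic dual of `Y ⊆ X*`, viewed inside the product `Y → ℝ`. It
induces the topology `σ(X, Y)`. -/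
def evalOn (Y : Submodule ℝ (X →L[ℝ] ℝ)) (x : X) (g : Y) : ℝ := (g : X →L[ℝ] ℝ) x

variable {Y : Submodule ℝ (X →L[ℝ] ℝ)}

theorem isCompact_image_evalOn (hC : @IsCompact X (sigmaTop (Y : Set (X →L[ℝ] ℝ))) C) :
    IsCompact (evalOn Y '' C) :=
  letI := sigmaTop (Y : Set (X →L[ℝ] ℝ))
  hC.image continuous_induced_dom

theorem closure_image_evalOn_subset (hcpt : @IsCompact X (sigmaTop (Y : Set (X →L[ℝ] ℝ)))
      (@closure X (sigmaTop (Y : Set (X →L[ℝ] ℝ))) C)) :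
    closure (evalOn Y '' C) ⊆ evalOn Y '' @closure X (sigmaTop (Y : Set (X →L[ℝ] ℝ))) C :=
  closure_minimal (Set.image_mono (@subset_closure X (sigmaTop _) C))
    (isCompact_image_evalOn hcpt).isClosed

/-- Functionals in `Y` as continuous functions on a set `K` of evaluations. -/
def coordinateMap {K : Set (Y → ℝ)} (hK : K ⊆ Set.range (evalOn Y)) : Y →ₗ[ℝ] C(K, ℝ) where
  toFun g := ⟨fun p => p.1 g, (continuous_apply g).comp continuous_subtype_val⟩
  map_add' g h := by
    ext p
    obtain ⟨x, hx⟩ := hK p.2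
    simp [← hx, evalOn]
  map_smul' r g := by
    ext p
    obtain ⟨x, hx⟩ := hK p.2
    simp [← hx, evalOn]

-- `φ` is represented by a measure on the `σ(X, Y)`-compact closure of `C`.
theorem exists_tendsto_of_le_supportFn (hne : C.Nonempty) (hC : Bornology.IsBounded C)
    (hcpt : @IsCompact X (sigmaTop (Y : Set (X →L[ℝ] ℝ)))
      (@closure X (sigmaTop (Y : Set (X →L[ℝ] ℝ))) C))
    {φ : Y →ₗ[ℝ] ℝ} (hφ : ∀ g : Y, φ g ≤ supportFn g C) {g : ℕ → Y} {R : ℝ}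
    (hR : ∀ n, ‖g n‖ ≤ R) (hlim : ∀ x, ∃ l, Tendsto (fun n => (g n : X →L[ℝ] ℝ) x) atTop (𝓝 l)) :
    ∃ l, Tendsto (fun n => φ (g n)) atTop (𝓝 l) := by
  let K : Set (Y → ℝ) := closure (evalOn Y '' C)
  have hsub := closure_image_evalOn_subset hcpt
  have hK : K ⊆ Set.range (evalOn Y) := hsub.trans (Set.image_subset_range _ _)
  have : CompactSpace K := isCompact_iff_compactSpace.1
    ((isCompact_image_evalOn hcpt).of_isClosed_subset isClosed_closure hsub)
  have : Nonempty K := (hne.image _).closure.to_subtype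
  have hφK : ∀ h, φ h ≤ ⨆ p, coordinateMap hK h p := by
    refine fun h => (hφ h).trans (csSup_le (hne.image _) (Set.forall_mem_image.2 fun x hx => ?_))
    exact le_ciSup (isCompact_range (coordinateMap hK h).continuous).bddAbove
      ⟨evalOn Y x, subset_closure (Set.mem_image_of_mem _ hx)⟩
  obtain ⟨b, hb⟩ := hC.exists_norm_le
  have hbound : ∀ n, K ⊆ {p | |p (g n)| ≤ R * b} := by
    refine fun n => closure_minimal (Set.image_subset_iff.2 fun x hx => ?_)
      (isClosed_le (continuous_apply (g n)).abs continuous_const)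
    exact (g n : X →L[ℝ] ℝ).le_of_opNorm_le_of_le (hR n) (hb x hx)
  refine exists_tendsto_of_le_iSup (coordinateMap hK) hφK (e := g)
    (fun n p => hbound n p.2) fun p => ?_
  obtain ⟨x, hx⟩ := hK p.2
  obtain ⟨l, hl⟩ := hlim x
  exact ⟨l, hl.congr fun n => congrFun hx (g n)⟩

end SupportFunctions

section Decomposition

theorem exists_seq_norm_sub_add_lt {X : Type*} [SeminormedAddCommGroup X] {C T : ℕ → Set X}
    (hT : ∀ k, T k ⊆ closure (C k + T (k + 1))) {y : X} (hy : y ∈ T 0) {δ : ℕ → ℝ}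
    (hδ : ∀ k, 0 < δ k) :
    ∃ r d : ℕ → X, r 0 = y ∧ (∀ k, r k ∈ T k) ∧ (∀ k, d k ∈ C k) ∧
      ∀ k, ‖r k - (d k + r (k + 1))‖ < δ k := by
  have hstep : ∀ k (x : T k), ∃ d ∈ C k, ∃ z : T (k + 1), ‖(x : X) - (d + z)‖ < δ k := by
    intro k x
    obtain ⟨_, ⟨d, hd, z, hz, rfl⟩, hdist⟩ := Metric.mem_closure_iff.1 (hT k x.2) (δ k) (hδ k)
    exact ⟨d, hd, ⟨z, hz⟩, dist_eq_norm (x : X) (d + z) ▸ hdist⟩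
  choose d hd z hz using hstep
  let r : ∀ k, T k := fun k => Nat.rec ⟨y, hy⟩ z k
  exact ⟨fun k => (r k).1, fun k => d k (r k), rfl, fun k => (r k).2, fun k => hd k (r k),
    fun k => hz k (r k)⟩

end Decomposition

section Selections

variable {X : Type*} [NormedAddCommGroup X] [NormedSpace ℝ X] {Y : Submodule ℝ (X →L[ℝ] ℝ)}
  {N : Set ℕ → Set X} {g : X →L[ℝ] ℝ} {r d : ℕ → X}

theorem summable_apply_of_mem_convexHull (hbd : ∀ I, Bornology.IsBounded (N I))
    (hg : CountablyAdditive fun I => supportFn g (N I))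
    (hneg : CountablyAdditive fun I => supportFn (-g) (N I))
    (hd : ∀ i, d i ∈ convexHull ℝ (N {i})) : Summable fun i => g (d i) :=
  .of_norm_bounded (hg.summable_singleton.abs.add hneg.summable_singleton.abs)
    fun i => abs_le_abs_supportFn_add (hbd {i}) g (hd i)

theorem tsum_indicator_apply_le_supportFn (hbd : ∀ I, Bornology.IsBounded (N I))
    (hg : CountablyAdditive fun I => supportFn g (N I))
    (hneg : CountablyAdditive fun I => supportFn (-g) (N I))
    (hd : ∀ i, d i ∈ convexHull ℝ (N {i})) (I : Set ℕ) :
    ∑' i, I.indicator (fun i => g (d i)) i ≤ supportFn g (N I) :=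
  hasSum_le
    (fun _ => Set.indicator_le_indicator (le_supportFn_of_mem_convexHull (hbd _) g (hd _)))
    ((summable_apply_of_mem_convexHull hbd hg hneg hd).indicator I).hasSum
    (hg.hasSum_indicator_singleton I)

theorem tendsto_apply_of_mem_convexHull_Ici (hbd : ∀ I, Bornology.IsBounded (N I))
    (hg : CountablyAdditive fun I => supportFn g (N I))
    (hneg : CountablyAdditive fun I => supportFn (-g) (N I))
    (hr : ∀ k, r k ∈ convexHull ℝ (N (Set.Ici k))) :
    Tendsto (fun k => g (r k)) atTop (𝓝 0) := by
  refine squeeze_zero_norm (fun k => abs_le_abs_supportFn_add (hbd _) g (hr k)) ?_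
  simpa using hg.tendsto_Ici.abs.add hneg.tendsto_Ici.abs

theorem exists_tendsto_tsum_indicator_apply (hne : ∀ I, (N I).Nonempty)
    (hbd : ∀ I, Bornology.IsBounded (N I))
    (hcpt : ∀ I, @IsCompact X (sigmaTop (Y : Set (X →L[ℝ] ℝ)))
      (@closure X (sigmaTop (Y : Set (X →L[ℝ] ℝ))) (N I)))
    (hca : ∀ g ∈ Y, CountablyAdditive fun I => supportFn g (N I))
    (hd : ∀ i, d i ∈ convexHull ℝ (N {i})) {g : ℕ → Y} {R : ℝ} (hR : ∀ n, ‖g n‖ ≤ R)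
    (hlim : ∀ x, ∃ l, Tendsto (fun n => (g n : X →L[ℝ] ℝ) x) atTop (𝓝 l)) (I : Set ℕ) :
    ∃ l, Tendsto (fun n => ∑' i, I.indicator (fun i => (g n : X →L[ℝ] ℝ) (d i)) i) atTop
      (𝓝 l) := by
  have hsum : ∀ h : Y, Summable (I.indicator fun i => (h : X →L[ℝ] ℝ) (d i)) := fun h =>
    (summable_apply_of_mem_convexHull hbd (hca h h.2) (hca _ (Y.neg_mem h.2)) hd).indicator I
  let φ : Y →ₗ[ℝ] ℝ :=
    { toFun := fun h => ∑' i, I.indicator (fun i => (h : X →L[ℝ] ℝ) (d i)) i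
      map_add' := fun h h' => by
        rw [← (hsum h).tsum_add (hsum h')]
        exact tsum_congr fun i => congrFun (Set.indicator_add I _ _) i
      map_smul' := fun c h => by
        rw [RingHom.id_apply, smul_eq_mul, ← tsum_mul_left]
        exact tsum_congr fun i => Set.indicator_const_smul_apply I c _ i }
  exact exists_tendsto_of_le_supportFn (φ := φ) (hne I) (hbd I) (hcpt I)
    (fun h => tsum_indicator_apply_le_supportFn hbd (hca h h.2) (hca _ (Y.neg_mem h.2)) hd I)
    hR hlim

theorem summable_apply_of_norm_le {e : ℕ → X} {δ : ℕ → ℝ} (hδ : Summable δ)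
    (he : ∀ i, ‖e i‖ ≤ δ i) (g : X →L[ℝ] ℝ) : Summable fun i => g (e i) :=
  .of_norm_bounded (hδ.mul_left ‖g‖) fun i => g.le_of_opNorm_le_of_le le_rfl (he i)

theorem tendsto_tsum_indicator_apply_of_norm_le {e : ℕ → X} {δ : ℕ → ℝ} (hδ : Summable δ)
    (he : ∀ i, ‖e i‖ ≤ δ i) {g : ℕ → X →L[ℝ] ℝ} {R : ℝ} (hR : ∀ n, ‖g n‖ ≤ R)
    {f : X → ℝ} (hlim : ∀ x, Tendsto (fun n => g n x) atTop (𝓝 (f x))) (I : Set ℕ) :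
    Tendsto (fun n => ∑' i, I.indicator (fun i => g n (e i)) i) atTop
      (𝓝 (∑' i, I.indicator (fun i => f (e i)) i)) := by
  classical
  refine tendsto_tsum_of_dominated_convergence (hδ.mul_left R) (fun i => ?_) (.of_forall fun n i =>
    (norm_indicator_le_norm_self _ i).trans ((g n).le_of_opNorm_le_of_le (hR n) (he i)))
  by_cases hi : i ∈ I
  · simpa only [Set.indicator_of_mem hi] using hlim (e i)
  · simpa only [Set.indicator_of_notMem hi] using tendsto_const_nhds

-- For `h` in `Y` the series `∑ h (r i - r (i + 1))` sums to `h (r 0)`. The selections `d` make its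
-- subseries converge along the sequence `g`, so Schur's argument passes the sum to the limit `f`.
theorem tendsto_apply_remainder (hne : ∀ I, (N I).Nonempty)
    (hbd : ∀ I, Bornology.IsBounded (N I))
    (hcpt : ∀ I, @IsCompact X (sigmaTop (Y : Set (X →L[ℝ] ℝ)))
      (@closure X (sigmaTop (Y : Set (X →L[ℝ] ℝ))) (N I)))
    (hca : ∀ g ∈ Y, CountablyAdditive fun I => supportFn g (N I))
    (hr : ∀ k, r k ∈ convexHull ℝ (N (Set.Ici k))) (hd : ∀ i, d i ∈ convexHull ℝ (N {i}))
    {δ : ℕ → ℝ} (hδ : Summable δ) (hrd : ∀ i, ‖r i - (d i + r (i + 1))‖ ≤ δ i)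
    {g : ℕ → Y} {R : ℝ} (hR : ∀ n, ‖g n‖ ≤ R) {f : X →L[ℝ] ℝ}
    (hlim : ∀ x, Tendsto (fun n => (g n : X →L[ℝ] ℝ) x) atTop (𝓝 (f x))) :
    Tendsto (fun k => f (r k)) atTop (𝓝 0) := by
  let e : ℕ → X := fun i => r i - (d i + r (i + 1))
  have hde : ∀ (h : X →L[ℝ] ℝ) i, h (r i) - h (r (i + 1)) = h (d i) + h (e i) := by
    intro h i
    simp only [e, map_sub, map_add]
    ring
  have hd_sum : ∀ h : Y, Summable fun i => (h : X →L[ℝ] ℝ) (d i) := fun h =>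
    summable_apply_of_mem_convexHull hbd (hca h h.2) (hca _ (Y.neg_mem h.2)) hd
  have he_sum : ∀ h : X →L[ℝ] ℝ, Summable fun i => h (e i) := summable_apply_of_norm_le hδ hrd
  refine tendsto_zero_of_cauchySeq_tsum_indicator_sub
    (x := fun n k => (g n : X →L[ℝ] ℝ) (r k)) (fun n => ?_) (fun I => ?_) (fun n => ?_)
    fun i => hlim (r i)
  · simpa only [hde] using ((hd_sum (g n)).add (he_sum (g n))).norm
  · obtain ⟨l, hl⟩ := exists_tendsto_tsum_indicator_apply hne hbd hcpt hca hd hR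
      (fun x => ⟨f x, hlim x⟩) I
    have he_lim := tendsto_tsum_indicator_apply_of_norm_le hδ hrd
      (g := fun n => (g n : X →L[ℝ] ℝ)) hR hlim I
    refine ((hl.add he_lim).congr fun n => ?_).cauchySeq
    simp only [hde, Set.indicator_add]
    exact (((hd_sum (g n)).indicator I).tsum_add ((he_sum (g n)).indicator I)).symm
  · exact tendsto_apply_of_mem_convexHull_Ici hbd (hca _ (g n).2) (hca _ (Y.neg_mem (g n).2)) hr

theorem supportFn_Ici_sub_apply_le (hbd : ∀ I, Bornology.IsBounded (N I)) {f : X →L[ℝ] ℝ}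
    (hfa : FinitelyAdditive fun I => supportFn f (N I)) (hd : ∀ i, d i ∈ convexHull ℝ (N {i}))
    {δ : ℕ → ℝ} (hrd : ∀ i, ‖r i - (d i + r (i + 1))‖ ≤ δ i) (k : ℕ) :
    supportFn f (N (Set.Ici k)) - f (r k) ≤
      supportFn f (N (Set.Ici 0)) - f (r 0) + ‖f‖ * ∑ i ∈ Finset.range k, δ i := by
  induction k with
  | zero => simp
  | succ k ih =>
    have herror : f (r k) - (f (d k) + f (r (k + 1))) ≤ ‖f‖ * δ k := by
      rw [← map_add, ← map_sub]
      exact (le_abs_self _).trans (f.le_of_opNorm_le_of_le le_rfl (hrd k))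
    have hdk := le_supportFn_of_mem_convexHull (hbd {k}) f (hd k)
    have hsplit : supportFn f (N (Set.Ici k)) =
        supportFn f (N {k}) + supportFn f (N (Set.Ici (k + 1))) := hfa.Ici_eq_singleton_add k
    rw [Finset.sum_range_succ, mul_add]
    linarith

theorem eventually_supportFn_Ici_le (hne : ∀ I, (N I).Nonempty)
    (hbd : ∀ I, Bornology.IsBounded (N I))
    (hcpt : ∀ I, @IsCompact X (sigmaTop (Y : Set (X →L[ℝ] ℝ)))
      (@closure X (sigmaTop (Y : Set (X →L[ℝ] ℝ))) (N I)))
    (hca : ∀ g ∈ Y, CountablyAdditive fun I => supportFn g (N I))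
    (hfa : ∀ f : X →L[ℝ] ℝ, FinitelyAdditive fun I => supportFn f (N I))
    {g : ℕ → Y} {R : ℝ} (hR : ∀ n, ‖g n‖ ≤ R) {f : X →L[ℝ] ℝ}
    (hlim : ∀ x, Tendsto (fun n => (g n : X →L[ℝ] ℝ) x) atTop (𝓝 (f x))) {ε : ℝ} (hε : 0 < ε) :
    ∀ᶠ k in atTop, supportFn f (N (Set.Ici k)) ≤ ε := by
  have hε3 : 0 < ε / 3 := by positivity
  obtain ⟨y, hy, hfy⟩ := exists_lt_of_lt_supportFn (hne (Set.Ici 0))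
    (sub_lt_self (supportFn f (N (Set.Ici 0))) hε3)
  obtain ⟨δ, hδpos, c, hδ, hc⟩ := posSumOfEncodable (div_pos hε3 (by positivity : 0 < ‖f‖ + 1)) ℕ
  have hclosure : ∀ k, convexHull ℝ (N (Set.Ici k)) ⊆
      closure (convexHull ℝ (N {k}) + convexHull ℝ (N (Set.Ici (k + 1)))) := fun k =>
    convexHull_subset_closure_add (hbd _) (hne _) (hne _)
      fun h => ((hfa h).Ici_eq_singleton_add k).le
  obtain ⟨r, d, rfl, hr, hd, hrd⟩ := exists_seq_norm_sub_add_lt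
    (T := fun k => convexHull ℝ (N (Set.Ici k))) hclosure (subset_convexHull ℝ _ hy) hδpos
  have hrd' : ∀ k, ‖r k - (d k + r (k + 1))‖ ≤ δ k := fun k => (hrd k).le
  have hfr := tendsto_apply_remainder hne hbd hcpt hca hr hd hδ.summable hrd' hR hlim
  filter_upwards [hfr.eventually_lt_const hε3] with k hk
  have herror : ‖f‖ * ∑ i ∈ Finset.range k, δ i ≤ ε / 3 := by
    calc ‖f‖ * ∑ i ∈ Finset.range k, δ i
        ≤ (‖f‖ + 1) * (ε / 3 / (‖f‖ + 1)) :=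
          mul_le_mul (le_add_of_nonneg_right zero_le_one)
            ((sum_le_hasSum _ (fun i _ => (hδpos i).le) hδ).trans hc)
            (Finset.sum_nonneg fun i _ => (hδpos i).le) (by positivity)
      _ = ε / 3 := by field_simp
  linarith [supportFn_Ici_sub_apply_le hbd (hfa f) hd hrd' k]

theorem tendsto_supportFn_Ici (hne : ∀ I, (N I).Nonempty)
    (hbd : ∀ I, Bornology.IsBounded (N I))
    (hcpt : ∀ I, @IsCompact X (sigmaTop (Y : Set (X →L[ℝ] ℝ)))
      (@closure X (sigmaTop (Y : Set (X →L[ℝ] ℝ))) (N I)))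
    (hca : ∀ g ∈ Y, CountablyAdditive fun I => supportFn g (N I))
    (hfa : ∀ f : X →L[ℝ] ℝ, FinitelyAdditive fun I => supportFn f (N I))
    {g : ℕ → Y} {R : ℝ} (hR : ∀ n, ‖g n‖ ≤ R) {f : X →L[ℝ] ℝ}
    (hlim : ∀ x, Tendsto (fun n => (g n : X →L[ℝ] ℝ) x) atTop (𝓝 (f x))) :
    Tendsto (fun k => supportFn f (N (Set.Ici k))) atTop (𝓝 0) := by
  refine Metric.tendsto_nhds.2 fun ε hε => ?_
  have hpos_le := eventually_supportFn_Ici_le hne hbd hcpt hca hfa hR hlim (half_pos hε)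
  have hneg_le := eventually_supportFn_Ici_le hne hbd hcpt hca hfa (g := fun n => -g n)
    (fun n => (norm_neg (g n)).trans_le (hR n)) (f := -f) (fun x => (hlim x).neg) (half_pos hε)
  filter_upwards [hpos_le, hneg_le] with k hpos hneg
  have hsum := supportFn_add_supportFn_neg_nonneg (hne (Set.Ici k)) (hbd (Set.Ici k)) f
  rw [Real.dist_0_eq_abs, abs_lt]
  constructor <;> linarith

end Selections

section Norming

variable {X : Type*} [NormedAddCommGroup X] [NormedSpace ℝ X] {Y : Submodule ℝ (X →L[ℝ] ℝ)}

theorem mem_closure_weakStarTop_of_forall_apply_le {C : Set (X →L[ℝ] ℝ)} (hC : Convex ℝ C)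
    {f : X →L[ℝ] ℝ} (hf : ∀ x r, (∀ g ∈ C, g x ≤ r) → f x ≤ r) :
    f ∈ @closure (X →L[ℝ] ℝ) (weakStarTop X) C := by
  by_contra hnot
  have hclosed : IsClosed (X := WeakBilin (topDualPairing ℝ X))
      (@closure (X →L[ℝ] ℝ) (weakStarTop X) C) := @isClosed_closure _ (weakStarTop X) _
  obtain ⟨φ, u, hlt, hux⟩ := geometric_hahn_banach_closed_point
    (Convex.closure (E := WeakBilin (topDualPairing ℝ X)) hC) hclosed hnot
  obtain ⟨x, rfl⟩ := LinearMap.dualEmbedding_surjective (topDualPairing ℝ X) φ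
  exact hux.not_ge (hf x u fun g hg => (hlt g (@subset_closure _ (weakStarTop X) _ _ hg)).le)

theorem IsNorming.exists_pos_forall_mul_norm_le (hY : IsNorming Y) :
    ∃ c > 0, ∀ x r, (∀ g ∈ Y, ‖g‖ ≤ 1 → |g x| ≤ r) → c * ‖x‖ ≤ r := by
  obtain ⟨c, hc, hsup⟩ := hY
  refine ⟨c, hc, fun x r hr => (hsup x).trans (csSup_le ?_ (Set.forall_mem_image.2 ?_))⟩
  · exact Set.Nonempty.image _ ⟨0, Y.zero_mem, Metric.mem_closedBall_self zero_le_one⟩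
  · exact fun g hg => hr g hg.1 (mem_closedBall_zero_iff.1 hg.2)

theorem IsNorming.exists_forall_apply_le (hY : IsNorming Y) (f : X →L[ℝ] ℝ) :
    ∃ R, ∀ x r, (∀ g ∈ (Y : Set (X →L[ℝ] ℝ)) ∩ Metric.closedBall 0 R, g x ≤ r) → f x ≤ r := by
  obtain ⟨c, hc, hnorm⟩ := hY.exists_pos_forall_mul_norm_le
  have hR : 0 < (‖f‖ + 1) / c := by positivity
  refine ⟨(‖f‖ + 1) / c, fun x r hr => ?_⟩
  have hscaled : ∀ g ∈ Y, ‖g‖ ≤ 1 → (‖f‖ + 1) / c * g x ≤ r := fun g hgY hg =>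
    hr (((‖f‖ + 1) / c) • g) ⟨Y.smul_mem _ hgY, mem_closedBall_zero_iff.2 <| by
      rw [norm_smul, Real.norm_of_nonneg hR.le]
      exact mul_le_of_le_one_right hR.le hg⟩
  have hcx : c * ‖x‖ ≤ r / ((‖f‖ + 1) / c) := by
    refine hnorm x _ fun g hgY hg => abs_le'.2 ⟨?_, ?_⟩
    · exact (le_div_iff₀' hR).2 (hscaled g hgY hg)
    · exact (le_div_iff₀' hR).2 (hscaled (-g) (Y.neg_mem hgY) ((norm_neg g).trans_le hg))
  calc
    f x ≤ ‖f‖ * ‖x‖ := (le_abs_self _).trans (f.le_opNorm x)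
    _ ≤ (‖f‖ + 1) * ‖x‖ := by gcongr; exact le_add_of_nonneg_right zero_le_one
    _ = (‖f‖ + 1) / c * (c * ‖x‖) := by field_simp
    _ ≤ r := (le_div_iff₀' hR).1 hcx

theorem PropertyE.exists_seq_tendsto (hE : PropertyE X) (hY : IsNorming Y) (f : X →L[ℝ] ℝ) :
    ∃ (R : ℝ) (g : ℕ → Y), (∀ n, ‖g n‖ ≤ R) ∧
      ∀ x, Tendsto (fun n => (g n : X →L[ℝ] ℝ) x) atTop (𝓝 (f x)) := by
  obtain ⟨R, hR⟩ := hY.exists_forall_apply_le f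
  have hconv := Y.convex.inter (convex_closedBall (0 : X →L[ℝ] ℝ) R)
  obtain ⟨g, hg, hlim⟩ := hE _ hconv (Metric.isBounded_closedBall.subset Set.inter_subset_right) f
    (mem_closure_weakStarTop_of_forall_apply_le hconv hR)
  exact ⟨R, fun n => ⟨g n, (hg n).1⟩, fun n => mem_closedBall_zero_iff.1 (hg n).2, hlim⟩

end Norming

theorem statement15_general {Ω X : Type*} [MeasurableSpace Ω] [NormedAddCommGroup X]
    [NormedSpace ℝ X] (hE : PropertyE X) (Y : Submodule ℝ (X →L[ℝ] ℝ)) (hYnorming : IsNorming Y)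
    (M : Set Ω → Set X) (hne : ∀ A : Set Ω, MeasurableSet A → (M A).Nonempty)
    (hbd : ∀ A : Set Ω, MeasurableSet A → Bornology.IsBounded (M A))
    (hcpt : ∀ A : Set Ω, MeasurableSet A →
      @IsCompact X (sigmaTop (Y : Set (X →L[ℝ] ℝ)))
        (@closure X (sigmaTop (Y : Set (X →L[ℝ] ℝ))) (M A)))
    (hca : ∀ f ∈ Y, CountablyAdditive (fun A => supportFn f (M A)))
    (hfa : ∀ f : X →L[ℝ] ℝ, FinitelyAdditive (fun A => supportFn f (M A))) (f : X →L[ℝ] ℝ) :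
    CountablyAdditive (fun A => supportFn f (M A)) := by
  obtain ⟨R, g, hR, hlim⟩ := hE.exists_seq_tendsto hYnorming f
  refine (hfa f).countablyAdditive_of_tendsto_zero fun A hA hdisj => ?_
  have hmeas : ∀ I : Set ℕ, MeasurableSet (⋃ n ∈ I, A n) := fun I =>
    .biUnion I.to_countable fun n _ => hA n
  exact tendsto_supportFn_Ici (N := fun I => M (⋃ n ∈ I, A n)) (fun I => hne _ (hmeas I))
    (fun I => hbd _ (hmeas I)) (fun I => hcpt _ (hmeas I))
    (fun h hh => (hca h hh).comp_biUnion hA hdisj) (fun h => (hfa h).comp_biUnion hA hdisj)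
    hR hlim

/-- Let `X` be a Banach space with property (E) and `Y ⊆ X*` a
norming norm-closed linear subspace. If `M : Σ → b(X)` has relatively `σ(X,Y)`-compact
values, `s(x*, M)` is countably additive for every `x* ∈ Y`, and `s(x*, M)` is finitely
additive for every `x* ∈ X*`, then `M` is a multimeasure: `s(x*, M)` is countably
additive for every `x* ∈ X*`. -/
theorem statement15 {Ω X : Type*} [MeasurableSpace Ω]
    [NormedAddCommGroup X] [NormedSpace ℝ X] [CompleteSpace X]
    (hE : PropertyE X)
    (Y : Submodule ℝ (X →L[ℝ] ℝ))
    (hYnorming : IsNorming Y)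
    (hYclosed : IsClosed (Y : Set (X →L[ℝ] ℝ)))
    (M : Set Ω → Set X)
    (hne : ∀ A : Set Ω, MeasurableSet A → (M A).Nonempty)
    (hbd : ∀ A : Set Ω, MeasurableSet A → Bornology.IsBounded (M A))
    (hcpt : ∀ A : Set Ω, MeasurableSet A →
      @IsCompact X (sigmaTop (Y : Set (X →L[ℝ] ℝ)))
        (@closure X (sigmaTop (Y : Set (X →L[ℝ] ℝ))) (M A)))
    (hca : ∀ f ∈ Y, CountablyAdditive (fun A => supportFn f (M A)))
    (hfa : ∀ f : X →L[ℝ] ℝ, FinitelyAdditive (fun A => supportFn f (M A))) :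
    ∀ f : X →L[ℝ] ℝ, CountablyAdditive (fun A => supportFn f (M A)) :=
  statement15_general hE Y hYnorming M hne hbd hcpt hca hfa
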